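/- Let V ⊂ ℝ^N be open with closure V̄, let φ ∈ C^∞(ℝ^N;ℝ) satisfy |∇φ| ≥ c > 0 on V̄, and let p₁, p₂ : ℝ^N × ℂ^N → ℂ be polynomial in the second variable with coefficients smooth in the first (the principal symbols of two differential operators). For a symbol p set p_φ(z,ζ,τ) := p(z, ζ + iτ∇φ(z)). Assume the characteristic sets are disjoint: there is no (z,ζ,τ) ∈ V̄ × ℝ^N × [0,∞) with (ζ,τ) ≠ (0,0) and p₁_φ(z,ζ,τ) = p₂_φ(z,ζ,τ) = 0. Then the pair (p₁p₂, φ) satisfies the sub-ellipticity condition on V̄ if and only if both (p₁, φ) and (p₂, φ) satisfy it. -/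

import Mathlib

/-- Poisson bracket `{f,g} = ∑_j (∂_{ζ_j} f ∂_{z_j} g − ∂_{z_j} f ∂_{ζ_j} g)` of real-valued
functions on phase space `ℝ^N × ℝ^N`. -/
noncomputable def poissonBracket {N : ℕ}
    (f g : ((Fin N → ℝ) × (Fin N → ℝ)) → ℝ) (w : (Fin N → ℝ) × (Fin N → ℝ)) : ℝ :=
  ∑ j : Fin N,
    (fderiv ℝ f w ((0 : Fin N → ℝ), Pi.single j 1) *
        fderiv ℝ g w (Pi.single j 1, (0 : Fin N → ℝ)) -
      fderiv ℝ f w (Pi.single j 1, (0 : Fin N → ℝ)) *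
        fderiv ℝ g w ((0 : Fin N → ℝ), Pi.single j 1))

/-- The conjugated symbol `p_φ(z,ζ,τ) = p(z, ζ + iτ∇φ(z))`. -/
noncomputable def conjSymb {N : ℕ} (p : (Fin N → ℝ) → (Fin N → ℂ) → ℂ)
    (φ : (Fin N → ℝ) → ℝ) (τ : ℝ) (w : (Fin N → ℝ) × (Fin N → ℝ)) : ℂ :=
  p w.1 (fun j => (w.2 j : ℂ) +
    (τ : ℂ) * Complex.I * ((fderiv ℝ φ w.1 (Pi.single j 1) : ℝ) : ℂ))

/-- The pair `(p, φ)` satisfies the sub-ellipticity condition on `S`. -/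
def SubEllipticOn {N : ℕ} (p : (Fin N → ℝ) → (Fin N → ℂ) → ℂ)
    (φ : (Fin N → ℝ) → ℝ) (S : Set (Fin N → ℝ)) : Prop :=
  ∀ z ∈ S, ∀ ζ : Fin N → ℝ, ∀ τ : ℝ, 0 < τ →
    conjSymb p φ τ (z, ζ) = 0 →
    0 < poissonBracket (fun w => (conjSymb p φ τ w).re)
      (fun w => (conjSymb p φ τ w).im) (z, ζ)

/-- At a zero of `F`, the bracket of `F * G` is `|G|²` times that of `F`. -/
theorem poissonBracket_mul_of_zero {N : ℕ}
    (F G : ((Fin N → ℝ) × (Fin N → ℝ)) → ℂ) (w : (Fin N → ℝ) × (Fin N → ℝ))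
    (hF : DifferentiableAt ℝ F w) (hG : DifferentiableAt ℝ G w) (h0 : F w = 0) :
    poissonBracket (fun w => (F w * G w).re) (fun w => (F w * G w).im) w =
      Complex.normSq (G w) * poissonBracket (fun w => (F w).re) (fun w => (F w).im) w := by
  have re_d : ∀ H : ((Fin N → ℝ) × (Fin N → ℝ)) → ℂ, DifferentiableAt ℝ H w → ∀ v,
      fderiv ℝ (fun w => (H w).re) w v = (fderiv ℝ H w v).re := by
    intro H hH v
    have := (Complex.reCLM.hasFDerivAt.comp w hH.hasFDerivAt).fderiv
    exact congrArg (fun L => L v) this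
  have im_d : ∀ H : ((Fin N → ℝ) × (Fin N → ℝ)) → ℂ, DifferentiableAt ℝ H w → ∀ v,
      fderiv ℝ (fun w => (H w).im) w v = (fderiv ℝ H w v).im := by
    intro H hH v
    have := (Complex.imCLM.hasFDerivAt.comp w hH.hasFDerivAt).fderiv
    exact congrArg (fun L => L v) this
  have hm : ∀ v, fderiv ℝ (fun w => F w * G w) w v = G w * fderiv ℝ F w v := by
    intro v
    rw [fderiv_fun_mul hF hG]
    simp [h0]
  unfold poissonBracket
  rw [Finset.mul_sum]
  refine Finset.sum_congr rfl fun j _ => ?_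
  have hFG : DifferentiableAt ℝ (fun w => F w * G w) w := hF.mul hG
  rw [re_d _ hFG, re_d _ hFG, im_d _ hFG, im_d _ hFG,
    re_d _ hF, re_d _ hF, im_d _ hF, im_d _ hF, hm, hm]
  simp only [Complex.mul_re, Complex.mul_im, Complex.normSq_apply]
  ring

theorem conjSymb_differentiable {N : ℕ} (φ : (Fin N → ℝ) → ℝ) (hφ : ContDiff ℝ (⊤ : ℕ∞) φ)
    (d : ℕ) (a : (Fin N → Fin (d + 1)) → (Fin N → ℝ) → ℂ)
    (ha : ∀ α, ContDiff ℝ (⊤ : ℕ∞) (a α))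
    (p : (Fin N → ℝ) → (Fin N → ℂ) → ℂ)
    (hp : ∀ z ζ, p z ζ = ∑ α : Fin N → Fin (d + 1), a α z * ∏ j, ζ j ^ (α j : ℕ)) (τ : ℝ) :
    Differentiable ℝ (conjSymb p φ τ) := by
  have h1 : Differentiable ℝ (fderiv ℝ φ) :=
    (hφ.fderiv_right (m := 1) (by
      have : ((1 + 1 : ℕ∞) : WithTop ℕ∞) ≤ ((⊤ : ℕ∞) : WithTop ℕ∞) := WithTop.coe_le_coe.2 le_top
      exact this)).differentiable (by simp)
  have h2 : ∀ j : Fin N, Differentiable ℝ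
      (fun w : (Fin N → ℝ) × (Fin N → ℝ) => fderiv ℝ φ w.1 (Pi.single j 1)) := fun j =>
    (h1.comp differentiable_fst).clm_apply (differentiable_const _)
  have h3 : ∀ j : Fin N, Differentiable ℝ
      (fun w : (Fin N → ℝ) × (Fin N → ℝ) => (w.2 j : ℂ) +
        (τ : ℂ) * Complex.I * ((fderiv ℝ φ w.1 (Pi.single j 1) : ℝ) : ℂ)) := by
    intro j
    have e1 : Differentiable ℝ (fun w : (Fin N → ℝ) × (Fin N → ℝ) => (w.2 j : ℂ)) :=
      Complex.ofRealCLM.differentiable.comp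
        (f := fun w : (Fin N → ℝ) × (Fin N → ℝ) => w.2 j) (by fun_prop)
    have e2 := Complex.ofRealCLM.differentiable.comp (h2 j)
    exact e1.add (e2.const_mul _)
  have e : conjSymb p φ τ = fun w => ∑ α : Fin N → Fin (d + 1), a α w.1 * ∏ j, ((w.2 j : ℂ) +
        (τ : ℂ) * Complex.I * ((fderiv ℝ φ w.1 (Pi.single j 1) : ℝ) : ℂ)) ^ (α j : ℕ) := by
    funext w
    simp only [conjSymb, hp]
  rw [e]
  refine Differentiable.fun_sum fun α _ => Differentiable.mul ?_ ?_
  · exact ((ha α).differentiable (by simp)).comp differentiable_fst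
  · exact fun w => (HasFDerivAt.finsetProd fun j _ => (((h3 j).fun_pow (α j : ℕ)) w).hasFDerivAt).differentiableAt

/-- If the characteristic sets of the conjugated symbols `p₁_φ` and `p₂_φ` are disjoint on `V̄`,
then `(p₁p₂, φ)` is sub-elliptic on `V̄` iff both `(p₁, φ)` and `(p₂, φ)` are. -/
theorem stmt4 (N : ℕ) (hN : 1 ≤ N)
    (V : Set (Fin N → ℝ)) (hV : IsOpen V)
    (φ : (Fin N → ℝ) → ℝ) (hφ : ContDiff ℝ (⊤ : ℕ∞) φ)
    (c : ℝ) (hc : 0 < c)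
    (hgrad : ∀ z ∈ closure V,
      c ≤ Real.sqrt (∑ j, (fderiv ℝ φ z (Pi.single j 1)) ^ 2))
    (d₁ d₂ : ℕ)
    (a₁ : (Fin N → Fin (d₁ + 1)) → (Fin N → ℝ) → ℂ) (ha₁ : ∀ α, ContDiff ℝ (⊤ : ℕ∞) (a₁ α))
    (a₂ : (Fin N → Fin (d₂ + 1)) → (Fin N → ℝ) → ℂ) (ha₂ : ∀ α, ContDiff ℝ (⊤ : ℕ∞) (a₂ α))
    (p₁ p₂ : (Fin N → ℝ) → (Fin N → ℂ) → ℂ)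
    (hp₁ : ∀ z ζ, p₁ z ζ = ∑ α : Fin N → Fin (d₁ + 1), a₁ α z * ∏ j, ζ j ^ (α j : ℕ))
    (hp₂ : ∀ z ζ, p₂ z ζ = ∑ α : Fin N → Fin (d₂ + 1), a₂ α z * ∏ j, ζ j ^ (α j : ℕ))
    (hdisj : ∀ z ∈ closure V, ∀ ζ : Fin N → ℝ, ∀ τ : ℝ, 0 ≤ τ → ¬ (ζ = 0 ∧ τ = 0) →
      ¬ (conjSymb p₁ φ τ (z, ζ) = 0 ∧ conjSymb p₂ φ τ (z, ζ) = 0)) :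
    SubEllipticOn (fun z ζ => p₁ z ζ * p₂ z ζ) φ (closure V) ↔
      (SubEllipticOn p₁ φ (closure V) ∧ SubEllipticOn p₂ φ (closure V)) := by
  have D₁ := conjSymb_differentiable φ hφ d₁ a₁ ha₁ p₁ hp₁
  have D₂ := conjSymb_differentiable φ hφ d₂ a₂ ha₂ p₂ hp₂
  have E : ∀ τ w, conjSymb (fun z ζ => p₁ z ζ * p₂ z ζ) φ τ w =
      conjSymb p₁ φ τ w * conjSymb p₂ φ τ w := fun _ _ => rfl
  -- brackets of the product at zeros of either factor
  have B₁ : ∀ τ w, conjSymb p₁ φ τ w = 0 →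
      poissonBracket (fun w => (conjSymb (fun z ζ => p₁ z ζ * p₂ z ζ) φ τ w).re)
        (fun w => (conjSymb (fun z ζ => p₁ z ζ * p₂ z ζ) φ τ w).im) w =
      Complex.normSq (conjSymb p₂ φ τ w) * poissonBracket (fun w => (conjSymb p₁ φ τ w).re)
        (fun w => (conjSymb p₁ φ τ w).im) w := fun τ w h =>
    poissonBracket_mul_of_zero _ _ w (D₁ τ w) (D₂ τ w) h
  have B₂ : ∀ τ w, conjSymb p₂ φ τ w = 0 →
      poissonBracket (fun w => (conjSymb (fun z ζ => p₁ z ζ * p₂ z ζ) φ τ w).re)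
        (fun w => (conjSymb (fun z ζ => p₁ z ζ * p₂ z ζ) φ τ w).im) w =
      Complex.normSq (conjSymb p₁ φ τ w) * poissonBracket (fun w => (conjSymb p₂ φ τ w).re)
        (fun w => (conjSymb p₂ φ τ w).im) w := fun τ w h => by
    have := poissonBracket_mul_of_zero _ _ w (D₂ τ w) (D₁ τ w) h
    simp only [E, mul_comm (conjSymb p₁ φ τ _) (conjSymb p₂ φ τ _)]
    exact this
  have N₁ : ∀ z ∈ closure V, ∀ ζ : Fin N → ℝ, ∀ τ : ℝ, 0 < τ → conjSymb p₁ φ τ (z, ζ) = 0 →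
      0 < Complex.normSq (conjSymb p₂ φ τ (z, ζ)) := fun z hz ζ τ hτ h =>
    Complex.normSq_pos.2 fun h' => hdisj z hz ζ τ hτ.le (fun k => hτ.ne' k.2) ⟨h, h'⟩
  have N₂ : ∀ z ∈ closure V, ∀ ζ : Fin N → ℝ, ∀ τ : ℝ, 0 < τ → conjSymb p₂ φ τ (z, ζ) = 0 →
      0 < Complex.normSq (conjSymb p₁ φ τ (z, ζ)) := fun z hz ζ τ hτ h =>
    Complex.normSq_pos.2 fun h' => hdisj z hz ζ τ hτ.le (fun k => hτ.ne' k.2) ⟨h', h⟩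
  constructor
  · intro H
    refine ⟨fun z hz ζ τ hτ h => ?_, fun z hz ζ τ hτ h => ?_⟩
    · have := H z hz ζ τ hτ (by rw [E, h, zero_mul])
      rw [B₁ _ _ h] at this
      exact (mul_pos_iff_of_pos_left (N₁ z hz ζ τ hτ h)).1 this
    · have := H z hz ζ τ hτ (by rw [E, h, mul_zero])
      rw [B₂ _ _ h] at this
      exact (mul_pos_iff_of_pos_left (N₂ z hz ζ τ hτ h)).1 this
  · rintro ⟨H₁, H₂⟩ z hz ζ τ hτ h
    rw [E] at h
    rcases mul_eq_zero.1 h with h | h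
    · rw [B₁ _ _ h]
      exact mul_pos (N₁ z hz ζ τ hτ h) (H₁ z hz ζ τ hτ h)
    · rw [B₂ _ _ h]
      exact mul_pos (N₂ z hz ζ τ hτ h) (H₂ z hz ζ τ hτ h)
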